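/- arXiv:2204.01469 — 2 statements merged into one kernel-verified Lean document; each statement's English description precedes it below -/
import Mathlib

section
/- (Dirichlet normalization integral.) Let K ≥ 2 and let α_1, ..., α_K > 0 be real numbers. Then the integral over the open solid simplex S = { (x_1, ..., x_{K−1}) ∈ ℝ^{K−1} : x_i > 0 for all i and Σ_{i=1}^{K−1} x_i < 1 }, with x_K := 1 − Σ_{i=1}^{K−1} x_i, satisfies ∫_S ∏_{k=1}^{K} x_k^{α_k − 1} dx_1 ⋯ dx_{K−1} = ( ∏_{k=1}^K Γ(α_k) ) / Γ( Σ_{k=1}^K α_k ), where Γ is the real Gamma function and the integral is with respect to Lebesgue measure on ℝ^{K−1}. -/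
open Finset Real MeasureTheory

open scoped Pointwise

/-!
Let `F t` be the Dirichlet integral over the simplex `{x | 0 < x i, ∑ i, x i < t}`, with `t` in
place of `1`. Dilating by `t` shows that `F t = t ^ (s - 1) * F 1`, where `s` is the sum of all the
parameters, so that `∫₀^∞ exp (-t) * F t = Γ(s) * F 1`. Since `exp (-t)` is the product of the
exponentials of the coordinates and of the slack `t - ∑ i, x i`, integrating over `t` first turns
the same integral into a product of Euler integrals `∏ k, Γ(α k)`.
-/

section ShearedProduct

variable {X G 𝕜 : Type*} [MeasurableSpace X] {μ : Measure X} [SFinite μ]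
  [AddGroup G] [MeasurableSpace G] [MeasurableAdd₂ G] [MeasurableNeg G]
  {ν : Measure G} [SFinite ν] [ν.IsAddRightInvariant] [RCLike 𝕜]
  {f : X → 𝕜} {g : G → 𝕜} {h : X → G}

lemma measurePreserving_prodMk_sub (hh : Measurable h) :
    MeasurePreserving (fun p : X × G ↦ (p.1, p.2 - h p.1)) (μ.prod ν) (μ.prod ν) :=
  (MeasurePreserving.id μ).skew_product (g := fun x t ↦ t - h x) (by fun_prop) <|
    .of_forall fun x ↦ (measurePreserving_sub_right ν (h x)).map_eq

lemma integrable_mul_comp_sub (hf : Integrable f μ) (hg : Integrable g ν) (hh : Measurable h) :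
    Integrable (fun p : X × G ↦ f p.1 * g (p.2 - h p.1)) (μ.prod ν) :=
  (measurePreserving_prodMk_sub hh).integrable_comp_of_integrable (hf.mul_prod hg)

lemma integral_integral_mul_comp_sub (hf : Integrable f μ) (hg : Integrable g ν)
    (hh : Measurable h) :
    ∫ t, ∫ x, f x * g (t - h x) ∂μ ∂ν = (∫ x, f x ∂μ) * ∫ t, g t ∂ν := by
  rw [← integral_integral_swap (integrable_mul_comp_sub hf hg hh)]
  simp_rw [integral_const_mul, integral_sub_right_eq_self g, integral_mul_const]

end ShearedProduct

/-- The unnormalized density of the Gamma distribution with shape `a` and rate `1`. It vanishes at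
`0`, unlike `ProbabilityTheory.gammaPDFReal`, so as to be supported on the open half-line. -/
noncomputable def gammaWeight (a : ℝ) : ℝ → ℝ :=
  (Set.Ioi 0).indicator fun x ↦ exp (-x) * x ^ (a - 1)

lemma integrable_gammaWeight {a : ℝ} (ha : 0 < a) : Integrable (gammaWeight a) :=
  (integrable_indicator_iff measurableSet_Ioi).2 (GammaIntegral_convergent ha)

lemma integral_gammaWeight {a : ℝ} (ha : 0 < a) : ∫ x, gammaWeight a x = Gamma a := by
  rw [Gamma_eq_integral ha, ← integral_indicator measurableSet_Ioi, gammaWeight]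

section Dirichlet

variable {ι : Type*} [Fintype ι]

variable (ι) in
/-- The open solid simplex of size `t`: the slack `t - ∑ i, x i` plays the part of a further
positive coordinate. -/
def openSolidSimplex (t : ℝ) : Set (ι → ℝ) :=
  {x | (∀ i, 0 < x i) ∧ ∑ i, x i < t}

lemma measurableSet_openSolidSimplex (t : ℝ) : MeasurableSet (openSolidSimplex ι t) := by
  unfold openSolidSimplex
  measurability

lemma openSolidSimplex_eq_empty {t : ℝ} (ht : t ≤ 0) : openSolidSimplex ι t = ∅ :=
  Set.eq_empty_of_forall_notMem fun _ hx ↦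
    ((sum_nonneg fun i _ ↦ (hx.1 i).le).trans_lt hx.2).not_ge ht

lemma smul_openSolidSimplex {c : ℝ} (hc : 0 < c) (t : ℝ) :
    c • openSolidSimplex ι t = openSolidSimplex ι (c * t) := by
  ext x
  simp [Set.mem_smul_set_iff_inv_smul_mem₀ hc.ne', openSolidSimplex, ← mul_sum,
    mul_pos_iff_of_pos_left (inv_pos.2 hc), inv_mul_lt_iff₀ hc]

/-- The unnormalized Dirichlet density on the solid simplex of size `t`; the parameter `b` belongs
to the slack coordinate. -/
noncomputable def dirichletWeight (a : ι → ℝ) (b t : ℝ) (x : ι → ℝ) : ℝ :=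
  (∏ i, x i ^ (a i - 1)) * (t - ∑ i, x i) ^ (b - 1)

/-- The Dirichlet integral over the solid simplex of size `t`. -/
noncomputable def dirichletIntegral (a : ι → ℝ) (b t : ℝ) : ℝ :=
  ∫ x in openSolidSimplex ι t, dirichletWeight a b t x

lemma dirichletWeight_smul (a : ι → ℝ) (b : ℝ) {c t : ℝ} (hc : 0 < c) {x : ι → ℝ}
    (hx : x ∈ openSolidSimplex ι t) :
    dirichletWeight a b (c * t) (c • x) =
      c ^ (∑ i, (a i - 1) + (b - 1)) * dirichletWeight a b t x := by
  have hprod : ∏ i, (c * x i) ^ (a i - 1) = c ^ (∑ i, (a i - 1)) * ∏ i, x i ^ (a i - 1) := by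
    simp_rw [mul_rpow hc.le (hx.1 _).le, prod_mul_distrib, rpow_sum_of_pos hc]
  simp only [dirichletWeight, Pi.smul_apply, smul_eq_mul, ← mul_sum, ← mul_sub]
  rw [hprod, mul_rpow hc.le (sub_pos.2 hx.2).le, rpow_add hc]
  ring

lemma dirichletIntegral_mul (a : ι → ℝ) (b : ℝ) {c : ℝ} (hc : 0 < c) (t : ℝ) :
    dirichletIntegral a b (c * t) = c ^ (∑ i, a i + b - 1) * dirichletIntegral a b t := by
  have hexp : c ^ (∑ i, a i + b - 1) =
      c ^ Fintype.card ι * c ^ (∑ i, (a i - 1) + (b - 1)) := by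
    rw [← rpow_natCast, ← rpow_add hc, sum_sub_distrib, sum_const, card_univ, nsmul_one]
    ring_nf
  calc
    dirichletIntegral a b (c * t)
      = c ^ Fintype.card ι *
          ∫ x in openSolidSimplex ι t, dirichletWeight a b (c * t) (c • x) := by
        rw [Measure.setIntegral_comp_smul_of_pos _ _ _ hc, smul_openSolidSimplex hc,
          Module.finrank_fintype_fun_eq_card, smul_eq_mul, mul_inv_cancel_left₀ (by positivity),
          dirichletIntegral]
    _ = c ^ (∑ i, a i + b - 1) * dirichletIntegral a b t := by
        rw [setIntegral_congr_fun (measurableSet_openSolidSimplex t)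
          fun x hx ↦ dirichletWeight_smul a b hc hx, integral_const_mul, hexp, mul_assoc,
          dirichletIntegral]

lemma prod_gammaWeight_mul_gammaWeight_sub_sum (a : ι → ℝ) (b t : ℝ) (x : ι → ℝ) :
    (∏ i, gammaWeight (a i) (x i)) * gammaWeight b (t - ∑ i, x i) =
      (openSolidSimplex ι t).indicator (fun x ↦ exp (-t) * dirichletWeight a b t x) x := by
  by_cases hx : x ∈ openSolidSimplex ι t
  · have hexp : exp (-t) = (∏ i, exp (-x i)) * exp (-(t - ∑ i, x i)) := by
      rw [← exp_sum, ← exp_add, sum_neg_distrib]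
      ring_nf
    simp only [gammaWeight, Set.indicator_of_mem hx, Set.indicator_of_mem (Set.mem_Ioi.2 (hx.1 _)),
      Set.indicator_of_mem (Set.mem_Ioi.2 (sub_pos.2 hx.2)), dirichletWeight, hexp,
      prod_mul_distrib]
    ring
  · rw [Set.indicator_of_notMem hx, mul_eq_zero, prod_eq_zero_iff]
    contrapose! hx
    have hpos {c y : ℝ} (hy : gammaWeight c y ≠ 0) : 0 < y := Set.mem_of_indicator_ne_zero hy
    exact ⟨fun i ↦ hpos (hx.1 i (mem_univ i)), sub_pos.1 (hpos hx.2)⟩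

lemma integral_prod_gammaWeight_mul_gammaWeight_sub_sum (a : ι → ℝ) (b t : ℝ) :
    ∫ x : ι → ℝ, (∏ i, gammaWeight (a i) (x i)) * gammaWeight b (t - ∑ i, x i) =
      exp (-t) * dirichletIntegral a b t := by
  simp_rw [prod_gammaWeight_mul_gammaWeight_sub_sum]
  rw [integral_indicator (measurableSet_openSolidSimplex t), integral_const_mul, dirichletIntegral]

lemma integral_Ioi_exp_neg_mul_dirichletIntegral {a : ι → ℝ} {b : ℝ} (ha : ∀ i, 0 < a i)
    (hb : 0 < b) :
    ∫ t in Set.Ioi 0, exp (-t) * dirichletIntegral a b t = (∏ i, Gamma (a i)) * Gamma b := by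
  have hzero : ∀ t ∉ Set.Ioi (0 : ℝ), exp (-t) * dirichletIntegral a b t = 0 := fun t ht ↦ by
    simp [dirichletIntegral, openSolidSimplex_eq_empty (not_lt.1 ht)]
  rw [setIntegral_eq_integral_of_forall_compl_eq_zero hzero]
  simp_rw [← integral_prod_gammaWeight_mul_gammaWeight_sub_sum]
  have hprod : Integrable fun x : ι → ℝ ↦ ∏ i, gammaWeight (a i) (x i) :=
    .fintype_prod fun i ↦ integrable_gammaWeight (ha i)
  rw [integral_integral_mul_comp_sub hprod (integrable_gammaWeight hb) (by fun_prop),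
    integral_fintype_prod_volume_eq_prod]
  simp_rw [integral_gammaWeight (ha _), integral_gammaWeight hb]

lemma dirichletIntegral_one {a : ι → ℝ} {b : ℝ} (ha : ∀ i, 0 < a i) (hb : 0 < b) :
    dirichletIntegral a b 1 = (∏ i, Gamma (a i)) * Gamma b / Gamma (∑ i, a i + b) := by
  have hs : 0 < ∑ i, a i + b := add_pos_of_nonneg_of_pos (sum_nonneg fun i _ ↦ (ha i).le) hb
  rw [eq_div_iff (Gamma_pos_of_pos hs).ne', mul_comm,
    ← integral_Ioi_exp_neg_mul_dirichletIntegral ha hb, Gamma_eq_integral hs, ← integral_mul_const]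
  refine setIntegral_congr_fun measurableSet_Ioi fun t ht ↦ ?_
  simpa only [mul_one, mul_assoc] using
    congrArg (exp (-t) * ·) (dirichletIntegral_mul a b ht 1).symm

theorem dirichlet_normalization_general {a : ι → ℝ} {b t : ℝ} (ha : ∀ i, 0 < a i) (hb : 0 < b)
    (ht : 0 < t) :
    ∫ x : ι → ℝ in {x | (∀ i, 0 < x i) ∧ ∑ i, x i < t},
        (∏ i, x i ^ (a i - 1)) * (t - ∑ i, x i) ^ (b - 1) =
      t ^ (∑ i, a i + b - 1) *
        ((∏ i, Gamma (a i)) * Gamma b / Gamma (∑ i, a i + b)) := by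
  rw [← dirichletIntegral_one ha hb, ← dirichletIntegral_mul a b ht, mul_one]
  rfl

end Dirichlet

/-- Dirichlet normalization integral: with `K + 1 ≥ 2` classes and parameters
`α k > 0`, integrating `∏ k x k ^ (α k − 1)` over the open solid simplex
`S = {x ∈ ℝ^K : x i > 0, Σ x i < 1}` (with last coordinate `1 − Σ x i`)
gives `(∏ k Γ(α k)) / Γ(Σ k α k)`. -/
theorem dirichlet_normalization (K : ℕ) (hK : 1 ≤ K)
    (α : Fin (K + 1) → ℝ) (hα : ∀ k, 0 < α k) :
    (∫ x : Fin K → ℝ in {x : Fin K → ℝ | (∀ i, 0 < x i) ∧ ∑ i, x i < 1},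
        ∏ k : Fin (K + 1), Fin.snoc x (1 - ∑ i, x i) k ^ (α k - 1)) =
      (∏ k, Real.Gamma (α k)) / Real.Gamma (∑ k, α k) := by
  simp only [Fin.prod_univ_castSucc, Fin.snoc_castSucc, Fin.snoc_last, Fin.sum_univ_castSucc]
  simpa only [one_rpow, one_mul] using
    dirichlet_normalization_general (fun i ↦ hα (Fin.castSucc i)) (hα (Fin.last K)) one_pos
end

section
/- (Wolpert–Wolf: posterior mean of entropy under a Dirichlet distribution.) Let K ≥ 2, let α_1, ..., α_K > 0, and set A = Σ_{k=1}^K α_k. Let S = { (x_1, ..., x_{K−1}) ∈ ℝ^{K−1} : x_i > 0, Σ x_i < 1 } with x_K := 1 − Σ_{i=1}^{K−1} x_i, and let the Dirichlet(α) density on S be f(x) = ( Γ(A) / ∏_{k=1}^K Γ(α_k) ) ∏_{k=1}^K x_k^{α_k − 1}. Then the expected Shannon entropy under Dirichlet(α) is ∫_S ( −Σ_{k=1}^K x_k log x_k ) f(x) dx = ψ(A + 1) − Σ_{k=1}^K (α_k / A) ψ(α_k + 1), where ψ(t) = d/dt log Γ(t) is the digamma function. -/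
open Finset Real MeasureTheory

/-- The digamma function `ψ(t) = d/dt log Γ(t)`. -/
noncomputable def digamma (t : ℝ) : ℝ := deriv (fun s : ℝ => Real.log (Real.Gamma s)) t

/-- The full probability vector `(x_1, …, x_K, 1 − Σ x_i)` associated to a point of the
open solid simplex in `ℝ^K`. -/
noncomputable def fullVec {K : ℕ} (x : Fin K → ℝ) : Fin (K + 1) → ℝ :=
  Fin.snoc x (1 - ∑ i, x i)

/-!
Write `B α = ∏ Γ(α k) / Γ(∑ α k)` for the multivariate beta function. By Dirichlet's formula `B α`
is the integral of the unnormalised density `∏ x k ^ (α k - 1)` over the simplex, and multiplying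
that density by `x k ^ t` only shifts the parameter `α k` to `α k + t`. Differentiating both sides
in `t` at `0` gives the expectation of `log (x k)` as `ψ(α k) - ψ(∑ α k)`; a further shift of `α k`
by `1`, with `B (α + e_k) = α k / (∑ α k) * B α`, gives that of `x k * log (x k)`.
-/

section Gamma

lemma ne_neg_natCast_of_pos {R : Type*} [Ring R] [PartialOrder R] [IsOrderedRing R] {t : R}
    (ht : 0 < t) (m : ℕ) : t ≠ -m :=
  ((neg_nonpos.2 m.cast_nonneg).trans_lt ht).ne'

lemma hasDerivAt_Gamma_digamma {t : ℝ} (ht : ∀ m : ℕ, t ≠ -m) :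
    HasDerivAt Gamma (digamma t * Gamma t) t := by
  have hd : HasDerivAt Gamma (deriv Gamma t) t := (differentiableAt_Gamma ht).hasDerivAt
  have hψ : digamma t = deriv Gamma t / Gamma t := (hd.log (Gamma_ne_zero ht)).deriv
  rwa [hψ, div_mul_cancel₀ _ (Gamma_ne_zero ht)]

lemma hasDerivAt_Gamma_add_div_Gamma_add {a b : ℝ} (ha : ∀ m : ℕ, a ≠ -m) (hb : ∀ m : ℕ, b ≠ -m) :
    HasDerivAt (fun t => Gamma (a + t) / Gamma (b + t))
      (Gamma a / Gamma b * (digamma a - digamma b)) 0 := by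
  have hΓ (c : ℝ) (hc : ∀ m : ℕ, c ≠ -m) :
      HasDerivAt (fun t => Gamma (c + t)) (digamma c * Gamma c) 0 :=
    HasDerivAt.comp_const_add c 0 (by simpa using hasDerivAt_Gamma_digamma hc)
  have hne : Gamma b ≠ 0 := Gamma_ne_zero hb
  refine ((hΓ a ha).div (hΓ b hb) (by simpa)).congr_deriv ?_
  simp only [add_zero]
  field_simp

end Gamma

section MultivariateBeta

variable {ι : Type*} [Fintype ι]

/-- The multivariate beta function `B(α) = ∏ Γ(α k) / Γ(∑ α k)`, the normalising constant of the
Dirichlet distribution with parameter `α`. -/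
noncomputable def multivariateBeta (α : ι → ℝ) : ℝ :=
  (∏ k, Gamma (α k)) / Gamma (∑ k, α k)

lemma multivariateBeta_pos [Nonempty ι] {α : ι → ℝ} (hα : ∀ k, 0 < α k) :
    0 < multivariateBeta α :=
  div_pos (prod_pos fun k _ => Gamma_pos_of_pos (hα k))
    (Gamma_pos_of_pos (sum_pos (fun k _ => hα k) univ_nonempty))

lemma multivariateBeta_fin_succ {n : ℕ} {α : Fin (n + 1) → ℝ}
    (hα : Gamma (∑ i : Fin n, α i.succ) ≠ 0) :
    multivariateBeta α =
      ProbabilityTheory.beta (α 0) (∑ i : Fin n, α i.succ) *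
        multivariateBeta fun i : Fin n => α i.succ := by
  simp only [multivariateBeta, ProbabilityTheory.beta, Fin.prod_univ_succ, Fin.sum_univ_succ]
  field_simp

variable [DecidableEq ι]

lemma multivariateBeta_add_single (α : ι → ℝ) (k : ι) (t : ℝ) :
    multivariateBeta (α + Pi.single k t) =
      Gamma (α k + t) / Gamma (∑ j, α j + t) * ∏ j ∈ univ.erase k, Gamma (α j) := by
  have hsum : ∑ j, (α + Pi.single k t : ι → ℝ) j = ∑ j, α j + t := by simp [sum_add_distrib]
  have hprod : ∏ j ∈ univ.erase k, Gamma ((α + Pi.single k t : ι → ℝ) j) =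
      ∏ j ∈ univ.erase k, Gamma (α j) :=
    prod_congr rfl fun j hj => by simp [ne_of_mem_erase hj]
  rw [multivariateBeta, hsum, ← mul_prod_erase _ _ (mem_univ k), hprod, Pi.add_apply,
    Pi.single_eq_same, mul_div_right_comm]

lemma multivariateBeta_eq_mul_prod_erase (α : ι → ℝ) (k : ι) :
    multivariateBeta α = Gamma (α k) / Gamma (∑ j, α j) * ∏ j ∈ univ.erase k, Gamma (α j) := by
  simpa using multivariateBeta_add_single α k 0

lemma multivariateBeta_add_single_one {α : ι → ℝ} {k : ι} (hk : α k ≠ 0) (hα : ∑ j, α j ≠ 0) :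
    multivariateBeta (α + Pi.single k 1) = α k / (∑ j, α j) * multivariateBeta α := by
  rw [multivariateBeta_add_single, Gamma_add_one hk, Gamma_add_one hα,
    multivariateBeta_eq_mul_prod_erase α k, mul_div_mul_comm, mul_assoc]

lemma hasDerivAt_multivariateBeta_add_single {α : ι → ℝ} {k : ι} (hk : ∀ m : ℕ, α k ≠ -m)
    (hα : ∀ m : ℕ, ∑ j, α j ≠ -m) :
    HasDerivAt (fun t => multivariateBeta (α + Pi.single k t))
      (multivariateBeta α * (digamma (α k) - digamma (∑ j, α j))) 0 := by
  simp only [multivariateBeta_add_single]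
  rw [multivariateBeta_eq_mul_prod_erase α k, mul_right_comm]
  exact (hasDerivAt_Gamma_add_div_Gamma_add hk hα).mul_const _

end MultivariateBeta

section BetaIntegral

variable {a s t : ℝ}

lemma integral_rpow_mul_sub_rpow (ha : 0 < a) (hs : 0 < s) (ht : 0 < t) :
    ∫ x in Set.Ioo 0 a, x ^ (s - 1) * (a - x) ^ (t - 1) =
      a ^ (s + t - 1) * ProbabilityTheory.beta s t := by
  have hbeta : Complex.betaIntegral s t = ProbabilityTheory.beta s t := by
    rw [Complex.betaIntegral_eq_Gamma_mul_div _ _ (by simpa) (by simpa), ProbabilityTheory.beta,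
      ← Complex.ofReal_add]
    simp only [Complex.Gamma_ofReal, Complex.ofReal_mul, Complex.ofReal_div]
  have hscaled := Complex.betaIntegral_scaled s t ha
  rw [hbeta, intervalIntegral.integral_of_le ha.le, integral_Ioc_eq_integral_Ioo] at hscaled
  rw [← Complex.ofReal_inj, ← integral_complex_ofReal]
  convert hscaled using 1
  · refine setIntegral_congr_fun measurableSet_Ioo fun x hx => ?_
    simp [Complex.ofReal_cpow hx.1.le, Complex.ofReal_cpow (sub_nonneg.2 hx.2.le)]
  · simp [Complex.ofReal_cpow ha.le]

lemma lintegral_rpow_mul_sub_rpow (ha : 0 < a) (hs : 0 < s) (ht : 0 < t) :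
    ∫⁻ x in Set.Ioo 0 a, ENNReal.ofReal (x ^ (s - 1) * (a - x) ^ (t - 1)) =
      ENNReal.ofReal (a ^ (s + t - 1) * ProbabilityTheory.beta s t) := by
  have hint := integral_rpow_mul_sub_rpow ha hs ht
  have hpos : 0 < a ^ (s + t - 1) * ProbabilityTheory.beta s t :=
    mul_pos (rpow_pos_of_pos ha _) (ProbabilityTheory.beta_pos hs ht)
  rw [← hint, ofReal_integral_eq_lintegral_ofReal]
  · -- the integral of a non-integrable function would be `0`
    exact not_imp_comm.1 integral_undef (hint ▸ hpos.ne')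
  · filter_upwards [ae_restrict_mem measurableSet_Ioo] with x hx
    exact mul_nonneg (rpow_nonneg hx.1.le _) (rpow_nonneg (sub_nonneg.2 hx.2.le) _)

end BetaIntegral

lemma lintegral_pi_fin_succ {n : ℕ} {X : Fin (n + 1) → Type*} [∀ i, MeasurableSpace (X i)]
    (μ : ∀ i, Measure (X i)) [∀ i, SigmaFinite (μ i)] {f : (∀ i, X i) → ENNReal}
    (hf : Measurable f) :
    ∫⁻ x, f x ∂Measure.pi μ =
      ∫⁻ y, ∫⁻ z, f (Fin.cons y z) ∂Measure.pi (fun i : Fin n => μ i.succ) ∂μ 0 := by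
  have he := (measurePreserving_piFinSuccAbove μ 0).symm
  rw [← he.lintegral_comp hf, lintegral_prod (fun p => f _) (hf.comp he.measurable).aemeasurable]
  simp only [MeasurableEquiv.piFinSuccAbove_symm_apply, Fin.insertNthEquiv_zero]
  rfl

section OpenSimplex

/-- The open solid simplex of size `c` in `ℝ^K`. The size is a parameter because slicing a simplex
by its first coordinate gives simplices of smaller size. -/
def openSimplex (K : ℕ) (c : ℝ) : Set (Fin K → ℝ) := {x | (∀ i, 0 < x i) ∧ ∑ i, x i < c}

variable {K : ℕ} {c : ℝ}

lemma measurableSet_openSimplex : MeasurableSet (openSimplex K c) := by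
  unfold openSimplex
  measurability

lemma openSimplex_zero (hc : 0 < c) : openSimplex 0 c = Set.univ := by
  simp [openSimplex, hc]

lemma cons_mem_openSimplex {y : ℝ} {z : Fin K → ℝ} :
    (Fin.cons y z : Fin (K + 1) → ℝ) ∈ openSimplex (K + 1) c ↔
      y ∈ Set.Ioo 0 c ∧ z ∈ openSimplex K (c - y) := by
  simp only [openSimplex, Set.mem_ofPred_eq, Fin.forall_fin_succ, Fin.cons_zero, Fin.cons_succ,
    Fin.sum_univ_succ, Set.mem_Ioo]
  constructor
  · rintro ⟨⟨hy, hz⟩, hsum⟩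
    have : 0 ≤ ∑ i, z i := sum_nonneg fun i _ => (hz i).le
    exact ⟨⟨hy, by linarith⟩, hz, by linarith⟩
  · rintro ⟨⟨hy, -⟩, hz, hsum⟩
    exact ⟨⟨hy, hz⟩, by linarith⟩

lemma setLIntegral_openSimplex_succ {f : (Fin (K + 1) → ℝ) → ENNReal} (hf : Measurable f) :
    ∫⁻ x in openSimplex (K + 1) c, f x =
      ∫⁻ y in Set.Ioo 0 c, ∫⁻ z in openSimplex K (c - y), f (Fin.cons y z) := by
  rw [← lintegral_indicator measurableSet_openSimplex,
    volume_pi, lintegral_pi_fin_succ _ (hf.indicator measurableSet_openSimplex),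
    ← lintegral_indicator measurableSet_Ioo]
  refine lintegral_congr fun y => ?_
  by_cases hy : y ∈ Set.Ioo 0 c
  · rw [Set.indicator_of_mem hy, ← lintegral_indicator measurableSet_openSimplex]
    exact lintegral_congr fun z =>
      Set.indicator_eq_indicator (cons_mem_openSimplex.trans (and_iff_right hy)) rfl
  · simp [Set.indicator, cons_mem_openSimplex, hy]

lemma lintegral_openSimplex_prod_rpow {α : Fin (K + 1) → ℝ} (hα : ∀ k, 0 < α k) (hc : 0 < c) :
    ∫⁻ x in openSimplex K c, ENNReal.ofReal
        ((∏ i, x i ^ (α i.castSucc - 1)) * (c - ∑ i, x i) ^ (α (Fin.last K) - 1)) =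
      ENNReal.ofReal (c ^ (∑ k, α k - 1) * multivariateBeta α) := by
  induction K generalizing c with
  | zero => simp [openSimplex_zero hc, multivariateBeta, volume_pi, (Gamma_pos_of_pos (hα 0)).ne']
  | succ K ih =>
    let β : Fin (K + 1) → ℝ := fun k => α k.succ
    have hβ : ∀ k, 0 < β k := fun k => hα k.succ
    have hB : 0 < ∑ k, β k := sum_pos (fun k _ => hβ k) univ_nonempty
    calc
      _ = ∫⁻ y in Set.Ioo 0 c, ∫⁻ z in openSimplex K (c - y), ENNReal.ofReal (y ^ (α 0 - 1)) *
            ENNReal.ofReal ((∏ i, z i ^ (β i.castSucc - 1)) *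
              (c - y - ∑ i, z i) ^ (β (Fin.last K) - 1)) := by
        rw [setLIntegral_openSimplex_succ (by fun_prop)]
        refine setLIntegral_congr_fun measurableSet_Ioo fun y hy => lintegral_congr fun z => ?_
        rw [← ENNReal.ofReal_mul (rpow_nonneg hy.1.le _)]
        simp [β, Fin.prod_univ_succ, Fin.sum_univ_succ, mul_assoc, sub_sub]
      _ = ∫⁻ y in Set.Ioo 0 c, ENNReal.ofReal (y ^ (α 0 - 1) * (c - y) ^ (∑ k, β k - 1)) *
            ENNReal.ofReal (multivariateBeta β) := by
        refine setLIntegral_congr_fun measurableSet_Ioo fun y hy => ?_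
        rw [lintegral_const_mul _ (by fun_prop), ih hβ (sub_pos.2 hy.2), ← ENNReal.ofReal_mul
          (rpow_nonneg hy.1.le _), ← mul_assoc, ENNReal.ofReal_mul' (multivariateBeta_pos hβ).le]
      _ = ENNReal.ofReal (c ^ (α 0 + ∑ k, β k - 1) *
            (ProbabilityTheory.beta (α 0) (∑ k, β k) * multivariateBeta β)) := by
        rw [lintegral_mul_const _ (by fun_prop), lintegral_rpow_mul_sub_rpow hc (hα 0) hB,
          ← ENNReal.ofReal_mul' (multivariateBeta_pos hβ).le, mul_assoc]
      _ = _ := by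
        rw [Fin.sum_univ_succ α, multivariateBeta_fin_succ (Gamma_pos_of_pos hB).ne']

end OpenSimplex

section FullVec

variable {K : ℕ} {x : Fin K → ℝ}

lemma sum_fullVec (x : Fin K → ℝ) : ∑ k, fullVec x k = 1 := by
  simp [fullVec, Fin.sum_univ_castSucc]

lemma fullVec_pos (hx : x ∈ openSimplex K 1) (k : Fin (K + 1)) : 0 < fullVec x k := by
  cases k using Fin.lastCases with
  | last => simpa [fullVec] using hx.2
  | cast i => simpa [fullVec] using hx.1 i

lemma fullVec_le_one (hx : x ∈ openSimplex K 1) (k : Fin (K + 1)) : fullVec x k ≤ 1 :=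
  sum_fullVec x ▸ single_le_sum (fun j _ => (fullVec_pos hx j).le) (mem_univ k)

@[fun_prop]
lemma measurable_fullVec (k : Fin (K + 1)) : Measurable fun x : Fin K → ℝ => fullVec x k := by
  cases k using Fin.lastCases <;> simp only [fullVec, Fin.snoc_last, Fin.snoc_castSucc] <;> fun_prop

end FullVec

lemma add_single_pos {ι : Type*} [DecidableEq ι] {α : ι → ℝ} (hα : ∀ k, 0 < α k) {k : ι} {t : ℝ}
    (ht : -α k < t) (j : ι) : 0 < (α + Pi.single k t : ι → ℝ) j := by
  rcases eq_or_ne j k with rfl | hj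
  · simpa [neg_lt_iff_pos_add'] using ht
  · simpa [hj] using hα j

section DirichletKernel

variable {K : ℕ} {α : Fin (K + 1) → ℝ} {x : Fin K → ℝ}

/-- The unnormalised density of the Dirichlet distribution with parameter `α`, in the coordinates
of the open solid simplex. -/
noncomputable def dirichletKernel (α : Fin (K + 1) → ℝ) (x : Fin K → ℝ) : ℝ :=
  ∏ k, fullVec x k ^ (α k - 1)

@[fun_prop]
lemma measurable_dirichletKernel (α : Fin (K + 1) → ℝ) : Measurable (dirichletKernel α) := by
  unfold dirichletKernel
  fun_prop

lemma dirichletKernel_nonneg (α : Fin (K + 1) → ℝ) (hx : x ∈ openSimplex K 1) :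
    0 ≤ dirichletKernel α x :=
  prod_nonneg fun k _ => rpow_nonneg (fullVec_pos hx k).le _

lemma ae_dirichletKernel_nonneg (α : Fin (K + 1) → ℝ) :
    0 ≤ᵐ[volume.restrict (openSimplex K 1)] dirichletKernel α :=
  ae_restrict_of_forall_mem measurableSet_openSimplex fun _ hx => dirichletKernel_nonneg α hx

lemma lintegral_dirichletKernel (hα : ∀ k, 0 < α k) :
    ∫⁻ x in openSimplex K 1, ENNReal.ofReal (dirichletKernel α x) =
      ENNReal.ofReal (multivariateBeta α) := by
  simpa [dirichletKernel, fullVec, Fin.prod_univ_castSucc] using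
    lintegral_openSimplex_prod_rpow hα one_pos

lemma integrableOn_dirichletKernel (hα : ∀ k, 0 < α k) :
    IntegrableOn (dirichletKernel α) (openSimplex K 1) := by
  refine ⟨(measurable_dirichletKernel α).aestronglyMeasurable, ?_⟩
  rw [hasFiniteIntegral_iff_ofReal (ae_dirichletKernel_nonneg α), lintegral_dirichletKernel hα]
  exact ENNReal.ofReal_lt_top

lemma integral_dirichletKernel (hα : ∀ k, 0 < α k) :
    ∫ x in openSimplex K 1, dirichletKernel α x = multivariateBeta α := by
  rw [integral_eq_lintegral_of_nonneg_ae (ae_dirichletKernel_nonneg α)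
    (measurable_dirichletKernel α).aestronglyMeasurable, lintegral_dirichletKernel hα,
    ENNReal.toReal_ofReal (multivariateBeta_pos hα).le]

lemma dirichletKernel_add_single (α : Fin (K + 1) → ℝ) (k : Fin (K + 1)) (t : ℝ)
    (hx : x ∈ openSimplex K 1) :
    dirichletKernel (α + Pi.single k t) x = dirichletKernel α x * fullVec x k ^ t := by
  have hprod : ∏ j, fullVec x j ^ (Pi.single k t : Fin (K + 1) → ℝ) j = fullVec x k ^ t := by
    rw [prod_eq_single k (fun j _ hj => by simp [hj]) (by simp), Pi.single_eq_same]
  simp only [← hprod, dirichletKernel, ← prod_mul_distrib, ← rpow_add (fullVec_pos hx _),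
    Pi.add_apply, add_sub_right_comm]

lemma dirichletKernel_add_single_anti (α : Fin (K + 1) → ℝ) (k : Fin (K + 1)) {s t : ℝ}
    (hst : s ≤ t) (hx : x ∈ openSimplex K 1) :
    dirichletKernel (α + Pi.single k t) x ≤ dirichletKernel (α + Pi.single k s) x := by
  rw [dirichletKernel_add_single α k t hx, dirichletKernel_add_single α k s hx]
  exact mul_le_mul_of_nonneg_left
    (rpow_le_rpow_of_exponent_ge (fullVec_pos hx k) (fullVec_le_one hx k) hst)
    (dirichletKernel_nonneg α hx)

end DirichletKernel

section LogMoment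

variable {K : ℕ} {α : Fin (K + 1) → ℝ} {x : Fin K → ℝ}

lemma abs_dirichletKernel_mul_log_le (α : Fin (K + 1) → ℝ) (k : Fin (K + 1)) {ε : ℝ} (hε : 0 < ε)
    (hx : x ∈ openSimplex K 1) :
    |dirichletKernel α x * log (fullVec x k)| ≤
      dirichletKernel (α + Pi.single k (-ε)) x * (1 / ε) := by
  have hpos := fullVec_pos hx k
  have hlog : |log (fullVec x k) * fullVec x k ^ ε| ≤ 1 / ε :=
    (abs_log_mul_self_rpow_lt _ ε hpos (fullVec_le_one hx k) hε).le
  have hshift : dirichletKernel α x =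
      dirichletKernel (α + Pi.single k (-ε)) x * fullVec x k ^ ε := by
    rw [dirichletKernel_add_single α k _ hx, mul_assoc, ← rpow_add hpos, neg_add_cancel, rpow_zero,
      mul_one]
  rw [hshift, mul_assoc, mul_comm (_ ^ ε), abs_mul, abs_of_nonneg (dirichletKernel_nonneg _ hx)]
  exact mul_le_mul_of_nonneg_left hlog (dirichletKernel_nonneg _ hx)

lemma integrableOn_dirichletKernel_mul_log (hα : ∀ k, 0 < α k) (k : Fin (K + 1)) :
    IntegrableOn (fun x => dirichletKernel α x * log (fullVec x k)) (openSimplex K 1) := by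
  have hε : 0 < α k / 2 := half_pos (hα k)
  have hbound := (integrableOn_dirichletKernel
    (add_single_pos hα (neg_lt_neg (half_lt_self (hα k))))).mul_const (1 / (α k / 2))
  exact hbound.mono' (Measurable.aestronglyMeasurable (by fun_prop))
    (ae_restrict_of_forall_mem measurableSet_openSimplex fun x hx =>
      abs_dirichletKernel_mul_log_le α k hε hx)

lemma hasDerivAt_dirichletKernel_add_single (α : Fin (K + 1) → ℝ) (k : Fin (K + 1)) (t : ℝ)
    (hx : x ∈ openSimplex K 1) :
    HasDerivAt (fun s => dirichletKernel (α + Pi.single k s) x)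
      (dirichletKernel (α + Pi.single k t) x * log (fullVec x k)) t := by
  simp only [dirichletKernel_add_single α k _ hx, mul_assoc]
  exact (hasStrictDerivAt_const_rpow (fullVec_pos hx k) t).hasDerivAt.const_mul _

lemma hasDerivAt_integral_dirichletKernel_add_single (hα : ∀ k, 0 < α k) (k : Fin (K + 1)) :
    HasDerivAt (fun t => ∫ x in openSimplex K 1, dirichletKernel (α + Pi.single k t) x)
      (∫ x in openSimplex K 1, dirichletKernel α x * log (fullVec x k)) 0 := by
  -- For `t` near `0` at most `α k / 4` of the exponent is lost to `t` and as much to the logarithm,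
  -- so the dominating kernel still has all its parameters positive.
  have hε : 0 < α k / 4 := div_pos (hα k) four_pos
  have hbound : ∀ x ∈ openSimplex K 1, ∀ t ∈ Set.Ioi (-(α k / 4)),
      ‖dirichletKernel (α + Pi.single k t) x * log (fullVec x k)‖ ≤
        dirichletKernel (α + Pi.single k (-(α k / 2))) x * (1 / (α k / 4)) := by
    intro x hx t ht
    refine (abs_dirichletKernel_mul_log_le _ k hε hx).trans ?_
    rw [add_assoc, ← Pi.single_add]
    have hshift : -(α k / 2) ≤ t + -(α k / 4) := by linarith [Set.mem_Ioi.1 ht]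
    gcongr
    exact dirichletKernel_add_single_anti α k hshift hx
  have hmem := ae_restrict_mem (μ := volume) (measurableSet_openSimplex (K := K) (c := 1))
  simpa using (hasDerivAt_integral_of_dominated_loc_of_deriv_le
    (Ioi_mem_nhds (neg_lt_zero.2 hε))
    (.of_forall fun t => (measurable_dirichletKernel _).aestronglyMeasurable)
    (by simpa using (integrableOn_dirichletKernel hα).integrable)
    (Measurable.aestronglyMeasurable (by fun_prop))
    (hmem.mono hbound)
    ((integrableOn_dirichletKernel
      (add_single_pos hα (neg_lt_neg (half_lt_self (hα k))))).mul_const _)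
    (hmem.mono fun x hx t _ => hasDerivAt_dirichletKernel_add_single α k t hx)).2

lemma integral_dirichletKernel_mul_log (hα : ∀ k, 0 < α k) (k : Fin (K + 1)) :
    ∫ x in openSimplex K 1, dirichletKernel α x * log (fullVec x k) =
      multivariateBeta α * (digamma (α k) - digamma (∑ j, α j)) := by
  have hA : 0 < ∑ j, α j := sum_pos (fun j _ => hα j) univ_nonempty
  have heq : (fun t => ∫ x in openSimplex K 1, dirichletKernel (α + Pi.single k t) x) =ᶠ[nhds 0]
      fun t => multivariateBeta (α + Pi.single k t) := by
    filter_upwards [Ioi_mem_nhds (neg_lt_zero.2 (hα k))] with t ht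
    exact integral_dirichletKernel (add_single_pos hα ht)
  exact (hasDerivAt_integral_dirichletKernel_add_single hα k).unique
    ((hasDerivAt_multivariateBeta_add_single (ne_neg_natCast_of_pos (hα k))
      (ne_neg_natCast_of_pos hA)).congr_of_eventuallyEq heq)

lemma dirichletKernel_mul_fullVec_mul_log (α : Fin (K + 1) → ℝ) (k : Fin (K + 1))
    (hx : x ∈ openSimplex K 1) :
    dirichletKernel α x * (fullVec x k * log (fullVec x k)) =
      dirichletKernel (α + Pi.single k 1) x * log (fullVec x k) := by
  rw [dirichletKernel_add_single α k 1 hx, rpow_one, mul_assoc]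

lemma integrableOn_dirichletKernel_mul_fullVec_mul_log (hα : ∀ k, 0 < α k) (k : Fin (K + 1)) :
    IntegrableOn (fun x => dirichletKernel α x * (fullVec x k * log (fullVec x k)))
      (openSimplex K 1) :=
  (integrableOn_dirichletKernel_mul_log
    (add_single_pos hα ((neg_lt_zero.2 (hα k)).trans one_pos)) k).congr_fun
    (fun _ hx => (dirichletKernel_mul_fullVec_mul_log α k hx).symm) measurableSet_openSimplex

lemma integral_dirichletKernel_mul_fullVec_mul_log (hα : ∀ k, 0 < α k) (k : Fin (K + 1)) :
    ∫ x in openSimplex K 1, dirichletKernel α x * (fullVec x k * log (fullVec x k)) =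
      multivariateBeta α *
        (α k / (∑ j, α j) * (digamma (α k + 1) - digamma (∑ j, α j + 1))) := by
  have hA : 0 < ∑ j, α j := sum_pos (fun j _ => hα j) univ_nonempty
  rw [setIntegral_congr_fun measurableSet_openSimplex
      fun x hx => dirichletKernel_mul_fullVec_mul_log α k hx,
    integral_dirichletKernel_mul_log (add_single_pos hα ((neg_lt_zero.2 (hα k)).trans one_pos)),
    multivariateBeta_add_single_one (hα k).ne' hA.ne']
  simp only [Pi.add_apply, Pi.single_eq_same, sum_add_distrib, sum_pi_single', mem_univ, if_true]
  ring

end LogMoment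

/-- Wolpert–Wolf: the posterior mean of the Shannon entropy under a
`Dirichlet(α)` distribution (on `K + 1 ≥ 2` classes, parametrized by the open
solid simplex in `ℝ^K` with last coordinate `1 − Σ x i`) equals
`ψ(A + 1) − Σ_k (α k / A) ψ(α k + 1)` where `A = Σ_k α k`. -/
theorem wolpert_wolf_expected_entropy (K : ℕ) (hK : 1 ≤ K)
    (α : Fin (K + 1) → ℝ) (hα : ∀ k, 0 < α k) :
    (∫ x : Fin K → ℝ in {x : Fin K → ℝ | (∀ i, 0 < x i) ∧ ∑ i, x i < 1},
        (-∑ k : Fin (K + 1), fullVec x k * Real.log (fullVec x k)) *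
          ((Real.Gamma (∑ k, α k) / ∏ k, Real.Gamma (α k)) *
            ∏ k : Fin (K + 1), fullVec x k ^ (α k - 1))) =
      digamma ((∑ k, α k) + 1) - ∑ k, (α k / (∑ j, α j)) * digamma (α k + 1) := by
  have hA : 0 < ∑ j, α j := sum_pos (fun j _ => hα j) univ_nonempty
  have hB : multivariateBeta α ≠ 0 := (multivariateBeta_pos hα).ne'
  have hweights : ∑ k, α k / (∑ j, α j) = 1 := by rw [← sum_div, div_self hA.ne']
  calc
    _ = ∫ x in openSimplex K 1, -(multivariateBeta α)⁻¹ *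
          ∑ k, dirichletKernel α x * (fullVec x k * log (fullVec x k)) := by
      refine setIntegral_congr_fun measurableSet_openSimplex fun x _ => ?_
      simp only [← mul_sum, multivariateBeta, inv_div, dirichletKernel]
      ring
    _ = -(multivariateBeta α)⁻¹ * ∑ k, multivariateBeta α *
          (α k / (∑ j, α j) * (digamma (α k + 1) - digamma (∑ j, α j + 1))) := by
      rw [integral_const_mul, integral_finsetSum _ fun k _ =>
        integrableOn_dirichletKernel_mul_fullVec_mul_log hα k]
      simp only [integral_dirichletKernel_mul_fullVec_mul_log hα]
    _ = _ := by
      rw [← mul_sum, ← mul_assoc, neg_mul, inv_mul_cancel₀ hB, neg_one_mul]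
      simp only [mul_sub, sum_sub_distrib, ← sum_mul, hweights, one_mul, neg_sub]
end
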